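/- Let s ≥ 1 and let F_1, …, F_t be finite nonempty families of continuous functions ℝ → ℝ, and let F be their (disjoint) union, such that any two distinct functions of F agree at no more than s points. Let C_i be the complexity of the lower envelope of F_i, and let C = C_1 + ⋯ + C_t. Then the complexity of the lower envelope of F is at most (C/t)·λ_s(3t); equivalently, t·M ≤ C·λ_s(3t), where M is the complexity of the lower envelope of F. (This is a precise form of the paper's bound O(λ_s(t)/t · C) for the lower envelope of t overlaid lower envelopes.) -/

import Mathlib

/-- The alternating list `a, b, a, b, …` of length `m`. -/
def altList {α : Type*} (a b : α) : ℕ → List α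
  | 0 => []
  | m + 1 => a :: altList b a m

/-- `S` is a Davenport–Schinzel sequence of order `s` on (at most) `n` symbols:
it uses at most `n` distinct symbols, no two adjacent elements are equal, and it
contains no alternating subsequence `a, b, a, b, …` of length `s + 2` for distinct
symbols `a, b`. -/
def IsDSSeq {α : Type*} [DecidableEq α] (n s : ℕ) (S : List α) : Prop :=
  S.toFinset.card ≤ n ∧ S.Chain' (· ≠ ·) ∧
    ∀ a b : α, a ≠ b → ¬ (altList a b (s + 2)).Sublist S

/-- `lambdaDS s n` is the maximum length `λ_s(n)` of a `DS(n, s)` sequence. -/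
noncomputable def lambdaDS (s n : ℕ) : ℕ :=
  sSup {m | ∃ S : List ℕ, IsDSSeq n s S ∧ S.length = m}

/-- The lower envelope of a family `G` of real functions: the pointwise infimum
(which is the pointwise minimum for a finite nonempty family). -/
noncomputable def lowerEnv (G : Finset (ℝ → ℝ)) : ℝ → ℝ :=
  fun x => sInf ((fun g => g x) '' (G : Set (ℝ → ℝ)))

/-- `EnvPartitionable G M` means that `ℝ` can be partitioned into `M` intervals on
each of which the lower envelope of `G` coincides with a single member of `G`. -/
def EnvPartitionable (G : Finset (ℝ → ℝ)) (M : ℕ) : Prop :=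
  ∃ I : Fin M → Set ℝ,
    (∀ j, (I j).OrdConnected) ∧
    (Pairwise fun j j' => Disjoint (I j) (I j')) ∧
    (⋃ j, I j) = Set.univ ∧
    ∀ j, ∃ g ∈ G, Set.EqOn (lowerEnv G) g (I j)

/-- The complexity of the lower envelope of `G`: the minimum number `M` such that
`ℝ` can be partitioned into `M` intervals on each of which the lower envelope of
`G` coincides with a single member of `G`. -/
noncomputable def envComplexity (G : Finset (ℝ → ℝ)) : ℕ :=
  sInf {M | EnvPartitionable G M}

open scoped Classical


section Combinatorics

variable {α : Type*}

theorem altList_sublist_of_le (m n : ℕ) (h : m ≤ n) (a b : α) :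
    (altList a b m).Sublist (altList a b n) := by
  induction m generalizing n a b with
  | zero => simp [altList]
  | succ m ih =>
    obtain ⟨n, rfl⟩ : ∃ k, n = k + 1 := ⟨n - 1, by omega⟩
    exact (ih n (by omega) b a).cons_cons a

theorem altList_map {β : Type*} (f : α → β) (m : ℕ) (a b : α) :
    (altList a b m).map f = altList (f a) (f b) m := by
  induction m generalizing a b with
  | zero => simp [altList]
  | succ m ih => simp [altList, ih]

theorem alt_of_count {iB : BEq (α × α)} [LawfulBEq (α × α)] (a b : α) (hab : a ≠ b) (N : ℕ) : ∀ S : List α, S.length ≤ N → ∀ k,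
    k ≤ (S.zip S.tail).count (a, b) → (altList a b (2 * k)).Sublist S := by
  induction N using Nat.strong_induction_on with
  | _ N ih =>
  intro S hS k hk
  match S, hS, hk with
  | [], _, hk => simp at hk; subst hk; simp [altList]
  | [x], _, hk => simp at hk; subst hk; simp [altList]
  | x :: y :: S', hS, hk =>
    simp only [List.length_cons] at hS
    by_cases hxy : x = a ∧ y = b
    · obtain ⟨rfl, rfl⟩ := hxy
      cases k with
      | zero => simp [altList]
      | succ k =>
        have h1 : k ≤ (S'.zip S'.tail).count (x, y) := by
          simp only [List.tail_cons, List.zip_cons_cons, List.count_cons_self] at hk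
          cases S' with
          | nil => simp at hk; simp [hk]
          | cons w S'' =>
            rw [List.zip_cons_cons, List.count_cons_of_ne] at hk
            · simpa using hk
            · intro h; simp at h; exact hab h.1.symm
        have h2 := ih (N - 2) (by omega) S' (by omega) k h1
        exact (h2.cons_cons y).cons_cons x
    · refine List.Sublist.cons _ (ih (N - 1) (by omega) (y :: S') (by simp; omega) k ?_)
      simp only [List.tail_cons, List.zip_cons_cons] at hk ⊢
      rwa [List.count_cons_of_ne] at hk
      intro h; simp at h; exact hxy h

theorem count_diag_of_chain {iB : BEq (α × α)} [LawfulBEq (α × α)] (a : α) (S : List α) (h : S.IsChain (· ≠ ·)) :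
    (S.zip S.tail).count (a, a) = 0 := by
  induction S with
  | nil => simp
  | cons x S ih =>
    cases S with
    | nil => simp
    | cons y S =>
      rw [List.isChain_cons_cons] at h
      simp only [List.tail_cons, List.zip_cons_cons] at ih ⊢
      rw [List.count_cons_of_ne, ih h.2]
      intro e; simp at e; exact h.1 (e.1.trans e.2.symm)

theorem ds_length_le (n s : ℕ) (S : List ℕ) (h : IsDSSeq n s S) :
    S.length ≤ n * n * (s + 2) + 1 := by
  obtain ⟨h1, h2, h3⟩ := h
  have hc : ∀ p : ℕ × ℕ, @List.count (ℕ × ℕ) instBEqOfDecidableEq p (S.zip S.tail) ≤ s + 2 := by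
    rintro ⟨a, b⟩
    by_cases hab : a = b
    · subst hab; rw [count_diag_of_chain (iB := instBEqOfDecidableEq) a S h2]; omega
    · by_contra hcon
      have := alt_of_count (iB := instBEqOfDecidableEq) a b hab S.length S le_rfl (s + 2) (not_le.1 hcon).le
      exact h3 a b hab ((altList_sublist_of_le _ _ (by omega) a b).trans this)
  have hl : (S.zip S.tail).length ≤ n * n * (s + 2) := by
    rw [← List.sum_toFinset_count_eq_length]
    calc _ ≤ ∑ a ∈ S.toFinset ×ˢ S.toFinset, (s + 2) := by
          refine (Finset.sum_le_sum (fun p _ => hc p)).trans ?_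
          apply Finset.sum_le_sum_of_subset
          rintro ⟨a, b⟩ hp
          rw [List.mem_toFinset] at hp
          have := List.of_mem_zip hp
          simp [this.1, List.mem_of_mem_tail this.2]
      _ ≤ _ := by
          rw [Finset.sum_const, Finset.card_product, smul_eq_mul]
          gcongr
  simp at hl
  omega

theorem le_lambdaDS (n s : ℕ) (S : List ℕ) (h : IsDSSeq n s S) : S.length ≤ lambdaDS s n := by
  refine le_csSup ⟨n * n * (s + 2) + 1, ?_⟩ ⟨S, h, rfl⟩
  rintro _ ⟨S, h, rfl⟩
  exact ds_length_le n s S h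

/-- Transport to an arbitrary alphabet. -/
theorem le_lambdaDS' (n s : ℕ) (S : List α) (h1 : S.toFinset.card ≤ n) (h2 : S.IsChain (· ≠ ·))
    (h3 : ∀ a b : α, a ≠ b → ¬ (altList a b (s + 2)).Sublist S) : S.length ≤ lambdaDS s n := by
  obtain ⟨φ, hφ⟩ : ∃ φ : α → ℕ, Set.InjOn φ {x | x ∈ S} := by
    refine ⟨fun x => S.idxOf x, ?_⟩
    intro x hx y hy hxy
    exact (List.idxOf_inj hx).1 hxy
  have := le_lambdaDS n s (S.map φ) ⟨?_, ?_, ?_⟩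
  · simpa using this
  · refine le_trans ?_ h1
    have : (S.map φ).toFinset = S.toFinset.image φ := by ext; simp
    rw [this]
    exact Finset.card_image_le
  · show List.IsChain _ _
    rw [List.isChain_map]
    rw [List.isChain_iff_getElem] at h2 ⊢
    intro i hi he
    exact h2 i hi (hφ (by simp) (by simp) he)
  · intro x y hxy hsub
    rw [List.sublist_map_iff] at hsub
    obtain ⟨L, hL, he⟩ := hsub
    have hlen : L.length = s + 2 := by
      have : ∀ m (x y : ℕ), (altList x y m).length = m := by
        intro m; induction m with
        | zero => simp [altList]
        | succ m ih => simp [altList, ih]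
      rw [← this (s + 2) x y, he]; simp
    obtain ⟨a, b, L', rfl⟩ : ∃ a b L', L = a :: b :: L' := by
      match L, hlen with
      | a :: b :: L', _ => exact ⟨a, b, L', rfl⟩
    have hx : x = φ a := by simp [altList] at he; exact he.1
    have hy : y = φ b := by simp [altList] at he; exact he.2.1
    have haS : a ∈ S := hL.subset (by simp)
    have hbS : b ∈ S := hL.subset (by simp)
    subst hx hy
    have key : ∀ m (a b : α), a ∈ S → b ∈ S → ∀ L : List α, (∀ z ∈ L, z ∈ S) →
        altList (φ a) (φ b) m = L.map φ → L = altList a b m := by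
      intro m
      induction m with
      | zero => intro a b _ _ L _ h; simp [altList] at h; simp [altList, h]
      | succ m ih =>
        intro a b ha hb L hLS h
        cases L with
        | nil => simp [altList] at h
        | cons z L =>
          simp only [altList, List.map_cons, List.cons.injEq] at h ⊢
          exact ⟨(hφ ha (hLS z (by simp)) h.1).symm,
            ih b a hb ha L (fun z hz => hLS z (by simp [hz])) h.2⟩
    have := key (s + 2) a b haS hbS _ (fun z hz => hL.subset hz) he
    rw [this] at hL
    exact h3 a b (fun e => hxy (by rw [e])) hL

/-- Number of changes of `h` between `a` and `c`. -/
noncomputable def nch (h : ℕ → α) (a c : ℕ) : ℕ :=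
  ((Finset.Ico a c).filter (fun j => h j ≠ h (j + 1))).card

theorem nch_self (h : ℕ → α) (a : ℕ) : nch h a a = 0 := by simp [nch]

theorem nch_add (h : ℕ → α) {a b c : ℕ} (hab : a ≤ b) (hbc : b ≤ c) :
    nch h a c = nch h a b + nch h b c := by
  unfold nch
  rw [← Finset.Ico_union_Ico_eq_Ico hab hbc, Finset.filter_union, Finset.card_union_of_disjoint]
  exact Finset.disjoint_filter_filter (Finset.Ico_disjoint_Ico_consecutive a b c)

theorem nch_succ (h : ℕ → α) (a : ℕ) :
    nch h a (a + 1) = if h a ≠ h (a + 1) then 1 else 0 := by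
  unfold nch
  rw [Nat.Ico_succ_singleton, Finset.filter_singleton]
  split_ifs <;> simp

theorem card_image_le_nch (h : ℕ → α) (a k : ℕ) :
    ((Finset.Icc a (a + k)).image h).card ≤ nch h a (a + k) + 1 := by
  induction k with
  | zero => simp
  | succ k ih =>
    rw [nch_add h (show a ≤ a + k by omega) (show a + k ≤ a + (k + 1) by omega),
      ← add_assoc a k 1, nch_succ]
    have e : Finset.Icc a (a + k + 1) = insert (a + k + 1) (Finset.Icc a (a + k)) := by
      ext; simp; omega
    rw [e, Finset.image_insert]
    split_ifs with hh
    · exact (Finset.card_insert_le _ _).trans (by omega)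
    · push Not at hh
      rw [Finset.insert_eq_of_mem]
      · omega
      · rw [← hh]; exact Finset.mem_image_of_mem h (by simp)

theorem runs_list (h : ℕ → α) (a k : ℕ) : ∃ S : List α, S.IsChain (· ≠ ·) ∧
    S.length = nch h a (a + k) + 1 ∧ S.Sublist ((List.range' a (k + 1)).map h) ∧
    S.getLast? = some (h (a + k)) := by
  induction k with
  | zero => exact ⟨[h a], by simp [nch_self]⟩
  | succ k ih =>
    obtain ⟨S, h1, h2, h3, h4⟩ := ih
    have e : (List.range' a (k + 1 + 1)).map h =
        (List.range' a (k + 1)).map h ++ [h (a + k + 1)] := by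
      rw [List.range'_concat]; simp [add_assoc]
    rw [e, nch_add h (show a ≤ a + k by omega) (show a + k ≤ a + (k + 1) by omega),
      ← add_assoc a k 1, nch_succ]
    by_cases hh : h (a + k) = h (a + k + 1)
    · exact ⟨S, h1, by simp [hh, h2], h3.trans (List.sublist_append_left _ _), by rw [h4, hh]⟩
    · refine ⟨S ++ [h (a + k + 1)], ?_, by simp [hh, h2], h3.append (List.Sublist.refl _),
        by simp⟩
      rw [List.isChain_append]
      refine ⟨h1, by simp, ?_⟩
      intro x hx y hy
      rw [h4] at hx
      simp at hx hy
      rw [← hx, ← hy]; exact hh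

theorem slab (s t m : ℕ) (h : ℕ → α) (hi : Fin t → ℕ → α)
    (hcov : ∀ j ≤ m, ∃ i, h j = hi i j)
    (halt : ∀ a b, a ≠ b → ¬ (altList a b (s + 2)).Sublist ((List.range (m + 1)).map h))
    (a c : ℕ) (hac : a ≤ c) (hcm : c ≤ m) (hB : ∑ i, nch (hi i) a c ≤ 2 * t) :
    nch h a c + 1 ≤ lambdaDS s (3 * t) := by
  obtain ⟨k, rfl⟩ := Nat.exists_eq_add_of_le hac
  obtain ⟨S, h1, h2, h3, -⟩ := runs_list h a k
  rw [← h2]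
  apply le_lambdaDS' _ _ _ _ h1
  · intro x y hxy hs
    apply halt x y hxy
    refine (hs.trans h3).trans (List.Sublist.map h ?_)
    have : List.range (m + 1) = List.range' 0 a ++ (List.range' a (k + 1) ++
        List.range' (a + (k + 1)) (m - a - k)) := by
      rw [List.range_eq_range', List.range'_append_1]
      have := List.range'_append_1 (s := 0) (m := a) (n := k + 1 + (m - a - k))
      rw [zero_add] at this
      rw [this]; congr 1; omega
    rw [this]
    exact (List.sublist_append_left _ _).trans (List.sublist_append_right _ _)
  · have : S.toFinset ⊆ Finset.univ.biUnion
        (fun i : Fin t => (Finset.Icc a (a + k)).image (hi i)) := by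
      intro x hx
      rw [List.mem_toFinset] at hx
      have := h3.subset hx
      simp only [List.mem_map, List.mem_range'_1] at this
      obtain ⟨j, hj, rfl⟩ := this
      obtain ⟨i, hi'⟩ := hcov j (by omega)
      simp only [Finset.mem_biUnion, Finset.mem_image, Finset.mem_univ, true_and, Finset.mem_Icc]
      exact ⟨i, j, by omega, hi'.symm⟩
    refine (Finset.card_le_card this).trans (Finset.card_biUnion_le.trans ?_)
    refine (Finset.sum_le_sum (fun i _ => card_image_le_nch (hi i) a k)).trans ?_
    rw [Finset.sum_add_distrib]
    simp
    omega

theorem comb_main (s t m : ℕ) (ht : 0 < t) (h : ℕ → α) (hi : Fin t → ℕ → α)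
    (hcov : ∀ j ≤ m, ∃ i, h j = hi i j)
    (halt : ∀ a b, a ≠ b → ¬ (altList a b (s + 2)).Sublist ((List.range (m + 1)).map h))
    (N : ℕ) : ∀ a ≤ m, m - a ≤ N →
    t * (nch h a m + 1) ≤ (∑ i, nch (hi i) a m + t) * lambdaDS s (3 * t) := by
  induction N using Nat.strong_induction_on with
  | _ N ih =>
  intro a ham hN
  by_cases hB : ∑ i, nch (hi i) a m ≤ 2 * t
  · have := slab s t m h hi hcov halt a m ham le_rfl hB
    calc _ ≤ t * lambdaDS s (3 * t) := by gcongr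
      _ ≤ _ := by gcongr; omega
  · have hex : ∃ c, a ≤ c ∧ t ≤ ∑ i, nch (hi i) a c := ⟨m, ham, by omega⟩
    classical
    obtain ⟨hc1, hc2⟩ := Nat.find_spec hex
    have hcm : Nat.find hex ≤ m := Nat.find_min' hex ⟨ham, by omega⟩
    have hmin := fun k => Nat.find_min hex (m := k)
    generalize Nat.find hex = c at *
    have hca : a ≠ c := by
      rintro rfl
      simp [nch_self] at hc2; omega
    obtain ⟨c, rfl⟩ : ∃ k, c = k + 1 := ⟨c - 1, by omega⟩
    have hlt : ∑ i, nch (hi i) a c < t := by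
      have := hmin c (by omega)
      by_contra hcon
      exact this ⟨by omega, by omega⟩
    have hs := slab s t m h hi hcov halt a c (by omega) (by omega) (by omega)
    have hr := ih (m - (c + 1)) (by omega) (c + 1) hcm le_rfl
    have e1 : nch h a m ≤ nch h a c + 1 + nch h (c + 1) m := by
      rw [nch_add h (show a ≤ c by omega) (show c ≤ m by omega),
        nch_add h (show c ≤ c + 1 by omega) hcm, nch_succ]
      split_ifs <;> omega
    have e2 : ∑ i, nch (hi i) a m = ∑ i, nch (hi i) a (c + 1) + ∑ i, nch (hi i) (c + 1) m := by
      rw [← Finset.sum_add_distrib]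
      exact Finset.sum_congr rfl fun i _ => nch_add _ hc1 hcm
    rw [e2]
    generalize lambdaDS s (3 * t) = l at *
    calc t * (nch h a m + 1) ≤ t * (nch h a c + 1) + t * (nch h (c + 1) m + 1) := by
          rw [← mul_add]; exact Nat.mul_le_mul_left _ (by omega)
      _ ≤ t * l + (∑ i, nch (hi i) (c + 1) m + t) * l := by gcongr
      _ = (t + ∑ i, nch (hi i) (c + 1) m + t) * l := by ring
      _ ≤ _ := by gcongr

end Combinatorics

section Geometry

theorem lowerEnv_eq {G : Finset (ℝ → ℝ)} {g : ℝ → ℝ} (hg : g ∈ G) {x : ℝ}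
    (h : ∀ f ∈ G, g x ≤ f x) : lowerEnv G x = g x := by
  unfold lowerEnv
  apply IsLeast.csInf_eq
  refine ⟨⟨g, by simpa using hg, rfl⟩, ?_⟩
  rintro _ ⟨f, hf, rfl⟩
  exact h f (by simpa using hf)

/-- number of points of `Z` below `x` -/
noncomputable def idx (Z : Finset ℝ) (x : ℝ) : ℕ := (Z.filter (fun z => z < x)).card

theorem idx_mono (Z : Finset ℝ) : Monotone (idx Z) := by
  intro x y hxy
  apply Finset.card_le_card
  intro z
  simp only [Finset.mem_filter]
  exact fun h => ⟨h.1, h.2.trans_le hxy⟩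

theorem idx_le (Z : Finset ℝ) (x : ℝ) : idx Z x ≤ Z.card := Finset.card_filter_le _ _

theorem idx_between (Z : Finset ℝ) {x y z : ℝ} (h : idx Z x = idx Z y) (hxz : x ≤ z)
    (hzy : z < y) : z ∉ Z := by
  intro hz
  have : idx Z x < idx Z y := by
    apply Finset.card_lt_card
    rw [Finset.ssubset_iff_of_subset]
    · exact ⟨z, by simp [hz, hzy], by simp [hxz]⟩
    · intro w
      simp only [Finset.mem_filter]
      exact fun h => ⟨h.1, h.2.trans_le (hxz.trans hzy.le)⟩
  omega

theorem idx_surj (Z : Finset ℝ) : ∀ j ≤ Z.card, ∃ x, idx Z x = j := by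
  induction Z using Finset.induction_on_max with
  | empty => intro j hj; simp at hj; exact ⟨0, by simp [idx, hj]⟩
  | insert a Z ha ih =>
    intro j hj
    have haZ : a ∉ Z := fun h => lt_irrefl _ (ha a h)
    rw [Finset.card_insert_of_notMem haZ] at hj
    rcases Nat.lt_or_ge Z.card j with h | h
    · refine ⟨a + 1, ?_⟩
      unfold idx
      rw [Finset.filter_true_of_mem, Finset.card_insert_of_notMem haZ]
      · omega
      · intro z hz
        rcases Finset.mem_insert.1 hz with rfl | hz
        · linarith
        · linarith [ha z hz]
    · obtain ⟨x, hx⟩ := ih j h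
      refine ⟨min x a, ?_⟩
      rw [← hx]
      unfold idx
      congr 1
      ext z
      simp only [Finset.mem_filter, Finset.mem_insert, lt_min_iff]
      constructor
      · rintro ⟨rfl | h, h1, h2⟩
        · exact absurd h2 (lt_irrefl _)
        · exact ⟨h, h1⟩
      · rintro ⟨h, h1⟩
        exact ⟨Or.inr h, h1, ha z h⟩

theorem exists_sample (Z : Finset ℝ) : ∃ p : ℕ → ℝ, ∀ j ≤ Z.card, p j ∉ Z ∧ idx Z (p j) = j := by
  have : ∀ j, ∃ x, j ≤ Z.card → x ∉ Z ∧ idx Z x = j := by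
    intro j
    by_cases hj : j ≤ Z.card
    · obtain ⟨x, hx⟩ := idx_surj Z j hj
      have hev : ∀ᶠ y in nhdsWithin x (Set.Iio x), y ∉ Z ∧ idx Z y = j := by
        have h1 : ∀ᶠ y in nhdsWithin x (Set.Iio x), ∀ z ∈ Z, (z < x → z < y) := by
          rw [Filter.eventually_all_finset]
          intro z hz
          by_cases hzx : z < x
          · filter_upwards [nhdsWithin_le_nhds (lt_mem_nhds hzx)] with y hy _ using hy
          · exact Filter.Eventually.of_forall fun y h => absurd h hzx
        filter_upwards [h1, self_mem_nhdsWithin] with y hy hyx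
        refine ⟨fun hyZ => lt_irrefl _ (hy y hyZ hyx), ?_⟩
        rw [← hx]
        unfold idx
        congr 1
        apply Finset.filter_congr
        intro z hz
        exact ⟨fun h => h.trans hyx, hy z hz⟩
      obtain ⟨y, hy⟩ := hev.exists
      exact ⟨y, fun _ => hy⟩
    · exact ⟨0, fun h => absurd h hj⟩
  choose p hp using this
  exact ⟨p, hp⟩

/-- intermediate value: strict sign change gives an interior crossing -/
theorem exists_cross {f g : ℝ → ℝ} (hf : Continuous f) (hg : Continuous g) {x y : ℝ}
    (hx : f x < g x) (hy : g y < f y) : ∃ z, f z = g z ∧ min x y < z ∧ z < max x y := by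
  have := intermediate_value_uIcc (a := x) (b := y) (f := fun z => f z - g z)
    (hf.sub hg).continuousOn
  have h0 : (0 : ℝ) ∈ Set.uIcc (f x - g x) (f y - g y) := by
    rw [Set.mem_uIcc]; left; constructor <;> linarith
  obtain ⟨z, hz, he⟩ := this h0
  simp only at he
  have hzx : z ≠ x := by rintro rfl; linarith
  have hzy : z ≠ y := by rintro rfl; linarith
  refine ⟨z, by linarith, ?_⟩
  rw [Set.mem_uIcc] at hz
  rcases hz with ⟨h1, h2⟩ | ⟨h1, h2⟩
  · have h1' := lt_of_le_of_ne h1 hzx.symm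
    have h2' := lt_of_le_of_ne h2 hzy
    exact ⟨min_lt_iff.2 (Or.inl h1'), lt_max_iff.2 (Or.inr h2')⟩
  · have h1' := lt_of_le_of_ne h1 hzy.symm
    have h2' := lt_of_le_of_ne h2 hzx
    exact ⟨min_lt_iff.2 (Or.inr h1'), lt_max_iff.2 (Or.inl h2')⟩

/-- Setup: `Z` contains all crossings of `G`, `p` samples, `h` is the minimizer sequence. -/
theorem partition_of_minimizers (G : Finset (ℝ → ℝ)) (hne : G.Nonempty)
    (hcont : ∀ f ∈ G, Continuous f) (Z : Finset ℝ)
    (hZ : ∀ f ∈ G, ∀ g ∈ G, f ≠ g → ∀ x, f x = g x → x ∈ Z)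
    (p : ℕ → ℝ) (hp : ∀ j ≤ Z.card, p j ∉ Z ∧ idx Z (p j) = j)
    (h : ℕ → ℝ → ℝ) (hG : ∀ j, h j ∈ G) (hmin : ∀ j, ∀ f ∈ G, h j (p j) ≤ f (p j)) :
    EnvPartitionable G (nch h 0 Z.card + 1) := by
  have hmain : ∀ x, lowerEnv G x = h (idx Z x) x := by
    intro x
    apply lowerEnv_eq (hG _)
    intro f hf
    by_contra hlt
    push Not at hlt
    set j := idx Z x with hj
    obtain ⟨hpZ, hpj⟩ := hp j (idx_le Z x)
    have hne' : h j ≠ f := by rintro rfl; exact lt_irrefl _ hlt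
    have hlt' : h j (p j) < f (p j) := lt_of_le_of_ne (hmin j f hf)
      (fun e => hpZ (hZ _ (hG j) f hf hne' _ e))
    obtain ⟨z, hz, h1, h2⟩ := exists_cross (hcont _ (hG j)) (hcont f hf) hlt' hlt
    have hzZ := hZ _ (hG j) f hf hne' _ hz
    rcases le_total (p j) x with hle | hle
    · rw [min_eq_left hle] at h1; rw [max_eq_right hle] at h2
      exact idx_between Z hpj h1.le h2 hzZ
    · rw [min_eq_right hle] at h1; rw [max_eq_left hle] at h2
      exact idx_between Z hpj.symm h1.le h2 hzZ
  have hrmono : Monotone (fun j => nch h 0 j) := by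
    intro a b hab
    simp only
    rw [nch_add h (Nat.zero_le a) hab]; omega
  have hconst : ∀ a k, nch h 0 a = nch h 0 (a + k) → h a = h (a + k) := by
    intro a k
    induction k with
    | zero => simp
    | succ k ih =>
      intro he
      have e1 := hrmono (show a ≤ a + k by omega)
      have e2 := hrmono (show a + k ≤ a + k + 1 by omega)
      simp only at e1 e2
      rw [← add_assoc] at he ⊢
      rw [ih (by omega)]
      have e3 := nch_add h (Nat.zero_le (a + k)) (show a + k ≤ a + k + 1 by omega)
      rw [nch_succ] at e3
      by_contra hcon
      rw [if_pos hcon] at e3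
      omega
  have hconst' : ∀ a b, nch h 0 a = nch h 0 b → h a = h b := by
    intro a b he
    rcases le_total a b with hab | hab
    · obtain ⟨k, rfl⟩ := Nat.exists_eq_add_of_le hab; exact hconst _ _ he
    · obtain ⟨k, rfl⟩ := Nat.exists_eq_add_of_le hab; exact (hconst _ _ he.symm).symm
  have hR : Monotone (fun x => nch h 0 (idx Z x)) := hrmono.comp (idx_mono Z)
  refine ⟨fun k => {x | nch h 0 (idx Z x) = k.1}, ?_, ?_, ?_, ?_⟩
  · intro k
    constructor
    intro x hx y hy z hz
    have h1 := hR hz.1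
    have h2 := hR hz.2
    simp only [Set.mem_ofPred_eq] at *
    omega
  · intro k k' hkk
    simp only
    rw [Set.disjoint_left]
    intro x hx hx'
    simp only [Set.mem_ofPred_eq] at hx hx'
    exact hkk (Fin.ext (hx.symm.trans hx'))
  · ext x
    simp only [Set.mem_iUnion, Set.mem_ofPred_eq, Set.mem_univ, iff_true]
    have := hrmono (idx_le Z x)
    exact ⟨⟨nch h 0 (idx Z x), Nat.lt_succ_of_le this⟩, rfl⟩
  · intro k
    by_cases hk : ∃ x, nch h 0 (idx Z x) = k.1
    · obtain ⟨x, hx⟩ := hk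
      refine ⟨h (idx Z x), hG _, ?_⟩
      intro y hy
      simp only [Set.mem_ofPred_eq] at hy
      rw [hmain y, hconst' (idx Z y) (idx Z x) (hy.trans hx.symm)]
    · obtain ⟨g, hg⟩ := hne
      exact ⟨g, hg, fun y hy => absurd ⟨y, hy⟩ hk⟩

theorem nch_le_of_partition (G : Finset (ℝ → ℝ)) (Z : Finset ℝ)
    (hZ : ∀ f ∈ G, ∀ g ∈ G, f ≠ g → ∀ x, f x = g x → x ∈ Z)
    (p : ℕ → ℝ) (hp : ∀ j ≤ Z.card, p j ∉ Z ∧ idx Z (p j) = j)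
    (h : ℕ → ℝ → ℝ) (hG : ∀ j, h j ∈ G) (hmin : ∀ j, ∀ f ∈ G, h j (p j) ≤ f (p j))
    (M : ℕ) (hM : EnvPartitionable G M) : nch h 0 Z.card + 1 ≤ M := by
  obtain ⟨I, hI1, hI2, hI3, hI4⟩ := hM
  choose g hgG hg using hI4
  have : ∀ j, ∃ k, p j ∈ I k := fun j => by
    have : p j ∈ ⋃ k, I k := by rw [hI3]; trivial
    simpa using this
  choose c hc using this
  have hgc : ∀ j ≤ Z.card, h j = g (c j) := by
    intro j hj
    by_contra hcon
    refine (hp j hj).1 (hZ _ (hG j) _ (hgG (c j)) hcon _ ?_)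
    rw [← hg (c j) (hc j)]
    exact (lowerEnv_eq (hG j) (hmin j)).symm
  have hpm : ∀ i j, i ≤ j → j ≤ Z.card → p i ≤ p j := by
    intro i j hij hj
    by_contra hcon
    push Not at hcon
    have := idx_mono Z hcon.le
    rw [(hp i (by omega)).2, (hp j hj).2] at this
    have : i = j := by omega
    subst this
    exact lt_irrefl _ hcon
  have hconv : ∀ i j k, i ≤ j → j ≤ k → k ≤ Z.card → c i = c k → c j = c k := by
    intro i j k hij hjk hk he
    by_contra hcon
    have h1 : p j ∈ I (c k) :=
      (hI1 (c k)).out (he ▸ hc i) (hc k) ⟨hpm i j hij (by omega), hpm j k hjk hk⟩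
    exact Set.disjoint_left.1 (hI2 hcon) (hc j) h1
  set D := (Finset.Ico 0 Z.card).filter (fun j => h j ≠ h (j + 1)) with hD
  have hcard : (insert 0 (D.image Nat.succ)).card = nch h 0 Z.card + 1 := by
    rw [Finset.card_insert_of_notMem (by simp), Finset.card_image_of_injective _ Nat.succ_injective]
    rfl
  rw [← hcard]
  have key : ∀ i j, i < j → j ∈ D.image Nat.succ → c i ≠ c j := by
    intro i j hij hj he
    rw [Finset.mem_image] at hj
    obtain ⟨k, hk, rfl⟩ := hj
    rw [hD, Finset.mem_filter, Finset.mem_Ico] at hk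
    have := hconv i k (k + 1) (by omega) (by omega) (by omega) he
    apply hk.2
    rw [hgc k (by omega), hgc (k + 1) (by omega), this]
  have : (insert 0 (D.image Nat.succ)).card ≤ (Finset.univ : Finset (Fin M)).card := by
    apply Finset.card_le_card_of_injOn c (by simp)
    intro i hi j hj hij
    simp only [Finset.coe_insert, Set.mem_insert_iff, Finset.mem_coe] at hi hj
    rcases lt_trichotomy i j with hlt | heq | hlt
    · exact absurd hij (key i j hlt (hj.resolve_left (by omega)))
    · exact heq
    · exact absurd hij.symm (key j i hlt (hi.resolve_left (by omega)))
  simpa using this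

theorem crossings_of_alt (p : ℕ → ℝ) (h : ℕ → ℝ → ℝ) (k : ℕ) :
    ∀ (f g : ℝ → ℝ), Continuous f → Continuous g → ∀ (i : ℕ) (L : List ℕ),
    (i :: L).Pairwise (fun i j => p i < p j) →
    (∀ j ∈ i :: L, h j = f → f (p j) < g (p j)) →
    (∀ j ∈ i :: L, h j = g → g (p j) < f (p j)) →
    altList f g (k + 1) = (i :: L).map h →
    ∃ T : Finset ℝ, T.card = k ∧ ∀ z ∈ T, f z = g z ∧ p i < z := by
  induction k with
  | zero => intro f g _ _ i L _ _ _ _; exact ⟨∅, by simp⟩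
  | succ k ih =>
    intro f g hf hg i L hL h1 h2 he
    cases L with
    | nil => simp [altList] at he
    | cons j L =>
      rw [altList, List.map_cons, List.cons.injEq] at he
      obtain ⟨e1, e2⟩ := he
      rw [List.pairwise_cons] at hL
      obtain ⟨T, hT1, hT2⟩ := ih g f hg hf j L hL.2 (fun a ha => h2 a (by simp [ha]))
        (fun a ha => h1 a (by simp [ha])) e2
      have e3 : g = h j := by
        simp only [altList, List.map_cons, List.cons.injEq] at e2; exact e2.1
      have hij : p i < p j := hL.1 j (by simp)
      obtain ⟨z, hz, hz1, hz2⟩ := exists_cross hf hg (h1 i (by simp) e1.symm)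
        (h2 j (by simp) e3.symm)
      rw [min_eq_left hij.le] at hz1
      rw [max_eq_right hij.le] at hz2
      refine ⟨insert z T, ?_, ?_⟩
      · rw [Finset.card_insert_of_notMem, hT1]
        intro hzT
        exact lt_asymm hz2 (hT2 z hzT).2
      · intro w hw
        rcases Finset.mem_insert.1 hw with rfl | hw
        · exact ⟨hz, hz1⟩
        · exact ⟨(hT2 w hw).1.symm, hij.trans (hT2 w hw).2⟩

end Geometry

/-- The lower envelope of `t` overlaid lower envelopes: if `F_1, …, F_t` are finite
nonempty disjoint families of continuous functions `ℝ → ℝ`, any two distinct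
functions of their union agreeing in at most `s` points, and `C_i` is the
complexity of the lower envelope of `F_i`, then the complexity `M` of the lower
envelope of the union satisfies `t * M ≤ (C_1 + ⋯ + C_t) * λ_s(3t)`. -/
theorem envelope_of_envelopes_complexity
    (s t : ℕ) (hs : 1 ≤ s)
    (F : Fin t → Finset (ℝ → ℝ))
    (hne : ∀ i, (F i).Nonempty)
    (hcont : ∀ i, ∀ f ∈ F i, Continuous f)
    (hdisj : ∀ i j : Fin t, i ≠ j → Disjoint (F i) (F j))
    (hagree : ∀ f ∈ Finset.univ.biUnion F, ∀ g ∈ Finset.univ.biUnion F, f ≠ g →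
      {x : ℝ | f x = g x}.Finite ∧ {x : ℝ | f x = g x}.ncard ≤ s) :
    t * envComplexity (Finset.univ.biUnion F) ≤
      (∑ i : Fin t, envComplexity (F i)) * lambdaDS s (3 * t) := by
  rcases Nat.eq_zero_or_pos t with rfl | ht
  · simp
  set G := Finset.univ.biUnion F with hGdef
  have hsub : ∀ i, ∀ f ∈ F i, f ∈ G := fun i f hf =>
    Finset.mem_biUnion.2 ⟨i, Finset.mem_univ i, hf⟩
  have hGne : G.Nonempty := by
    obtain ⟨f, hf⟩ := hne ⟨0, ht⟩
    exact ⟨f, hsub _ f hf⟩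
  have hGcont : ∀ f ∈ G, Continuous f := by
    intro f hf
    obtain ⟨i, -, hi⟩ := Finset.mem_biUnion.1 hf
    exact hcont i f hi
  -- all crossings
  have hfin : (⋃ f ∈ G, ⋃ g ∈ G, {x : ℝ | f ≠ g ∧ f x = g x}).Finite := by
    refine Set.Finite.biUnion G.finite_toSet fun f hf => Set.Finite.biUnion G.finite_toSet
      fun g hg => ?_
    by_cases hfg : f = g
    · simp [hfg]
    · exact (hagree f hf g hg hfg).1.subset fun x hx => hx.2
  set Z := hfin.toFinset with hZdef
  have hZ : ∀ f ∈ G, ∀ g ∈ G, f ≠ g → ∀ x, f x = g x → x ∈ Z := by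
    intro f hf g hg hfg x hx
    rw [hZdef, Set.Finite.mem_toFinset]
    simp only [Set.mem_iUnion]
    exact ⟨f, hf, g, hg, hfg, hx⟩
  clear_value Z
  obtain ⟨p, hp⟩ := exists_sample Z
  have hpick : ∀ H : Finset (ℝ → ℝ), H.Nonempty → ∃ h : ℕ → ℝ → ℝ, (∀ j, h j ∈ H) ∧
      ∀ j, ∀ f ∈ H, h j (p j) ≤ f (p j) := by
    intro H hH
    have : ∀ j, ∃ g ∈ H, ∀ f ∈ H, g (p j) ≤ f (p j) := fun j =>
      Finset.exists_min_image H (fun g => g (p j)) hH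
    choose h h1 h2 using this
    exact ⟨h, h1, h2⟩
  obtain ⟨h, hG, hmin⟩ := hpick G hGne
  choose hi hiF himin using fun i => hpick (F i) (hne i)
  have hZi : ∀ i, ∀ f ∈ F i, ∀ g ∈ F i, f ≠ g → ∀ x, f x = g x → x ∈ Z :=
    fun i f hf g hg => hZ f (hsub i f hf) g (hsub i g hg)
  have hM : envComplexity G ≤ nch h 0 Z.card + 1 :=
    Nat.sInf_le (partition_of_minimizers G hGne hGcont Z hZ p hp h hG hmin)
  have hC : ∀ i, nch (hi i) 0 Z.card + 1 ≤ envComplexity (F i) := by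
    intro i
    apply nch_le_of_partition (F i) Z (hZi i) p hp (hi i) (hiF i) (himin i)
    exact Nat.sInf_mem (s := {M | EnvPartitionable (F i) M}) ⟨_, partition_of_minimizers (F i)
      (hne i) (hcont i) Z (hZi i) p hp (hi i) (hiF i) (himin i)⟩
  have hcov : ∀ j ≤ Z.card, ∃ i, h j = hi i j := by
    intro j hj
    obtain ⟨i, -, hi'⟩ := Finset.mem_biUnion.1 (hG j)
    refine ⟨i, ?_⟩
    by_contra hcon
    exact (hp j hj).1 (hZ _ (hG j) _ (hsub i _ (hiF i j)) hcon _
      (le_antisymm (hmin j _ (hsub i _ (hiF i j))) (himin i j _ hi')))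
  have hstrict : ∀ j ≤ Z.card, ∀ g ∈ G, h j ≠ g → h j (p j) < g (p j) := by
    intro j hj g hg hne'
    exact lt_of_le_of_ne (hmin j g hg) fun e => (hp j hj).1 (hZ _ (hG j) g hg hne' _ e)
  have halt : ∀ a b, a ≠ b →
      ¬ (altList a b (s + 2)).Sublist ((List.range (Z.card + 1)).map h) := by
    intro a b hab hsl
    have hmem : ∀ x ∈ altList a b (s + 2), x ∈ G := by
      intro x hx
      obtain ⟨j, -, rfl⟩ := List.mem_map.1 (hsl.subset hx)
      exact hG j
    have ha : a ∈ G := hmem a (by simp [altList])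
    have hb : b ∈ G := hmem b (by simp [altList])
    obtain ⟨L, hL, he⟩ := List.sublist_map_iff.1 hsl
    have hLle : ∀ j ∈ L, j ≤ Z.card := fun j hj => by
      have := hL.subset hj
      rw [List.mem_range] at this; omega
    have hLlt : L.Pairwise (· < ·) := List.Pairwise.sublist hL List.pairwise_lt_range
    cases L with
    | nil => simp [altList] at he
    | cons i L =>
      obtain ⟨T, hT1, hT2⟩ := crossings_of_alt p h (s + 1) a b (hGcont a ha) (hGcont b hb) i L
        (by
          refine List.Pairwise.imp_of_mem ?_ hLlt
          intro x y hx hy hxy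
          by_contra hcon
          have := idx_mono Z (not_lt.1 hcon)
          rw [(hp x (hLle x hx)).2, (hp y (hLle y hy)).2] at this
          omega)
        (by
          intro j hj e
          have := hstrict j (hLle j hj) b hb (by rw [e]; exact hab)
          rwa [e] at this)
        (by
          intro j hj e
          have := hstrict j (hLle j hj) a ha (by rw [e]; exact hab.symm)
          rwa [e] at this)
        he
      obtain ⟨hf, hn⟩ := hagree a ha b hb hab
      have : (T : Set ℝ).ncard ≤ {x : ℝ | a x = b x}.ncard :=
        Set.ncard_le_ncard (fun z hz => (hT2 z hz).1) hf
      rw [Set.ncard_coe_finset] at this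
      omega
  have hmain := comb_main s t Z.card ht h hi hcov halt Z.card 0 (Nat.zero_le _) (by omega)
  have hsum : ∑ i, nch (hi i) 0 Z.card + t ≤ ∑ i, envComplexity (F i) := by
    have := Finset.sum_le_sum (s := Finset.univ) (fun i _ => hC i)
    rw [Finset.sum_add_distrib] at this
    simpa using this
  calc _ ≤ t * (nch h 0 Z.card + 1) := Nat.mul_le_mul_left _ hM
    _ ≤ _ := hmain
    _ ≤ _ := Nat.mul_le_mul_right _ hsum
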